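/- arXiv:2105.05848 — 3 statements merged into one kernel-verified Lean document; each statement's English description precedes it below -/
import Mathlib

section
/- Let d ≥ 1, let Ω ⊂ ℝ^d be a bounded open set, T > 0, and α ∈ (0,1). For k = 1,…,d let a_k, b_k, c : closure(Ω) → ℝ be continuous functions with a_k(x) > 0 and c(x) ≥ 0 for all x ∈ closure(Ω). Let v : closure(Ω) × [0,T] → ℝ be continuous; assume that for each t ∈ (0,T] the function x ↦ v(x,t) is twice continuously differentiable on Ω, and that for each x ∈ Ω the function t ↦ v(x,t) is Lipschitz continuous on [ε, T] for every ε ∈ (0,T). Assume v(x,0) ≥ 0 for all x ∈ closure(Ω), v(x,t) ≥ 0 for all x ∈ ∂Ω and t ∈ [0,T], and that for all x ∈ Ω and t ∈ (0,T]: (1/Γ(1−α)) ( t^{−α}(v(x,t) − v(x,0)) + ∫_0^t α (t−s)^{−α−1} (v(x,t) − v(x,s)) ds ) + ∑_{k=1}^d ( −a_k(x) ∂²v/∂x_k²(x,t) + b_k(x) ∂v/∂x_k(x,t) ) + c(x) v(x,t) ≥ 0. Then v(x,t) ≥ 0 for all (x,t) ∈ closure(Ω) × [0,T]. -/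
open MeasureTheory Real

/-- The Caputo fractional derivative of order `α` of a scalar function `w` of time,
in the integrated-by-parts form
`Γ(1-α) D_t^α w(t) = t^(-α)(w(t) - w(0)) + ∫_0^t α (t-s)^(-α-1) (w(t) - w(s)) ds`. -/
noncomputable def fracDer (α : ℝ) (w : ℝ → ℝ) (t : ℝ) : ℝ :=
  (1 / Real.Gamma (1 - α)) * (t ^ (-α) * (w t - w 0)
    + ∫ s in Set.Ioo 0 t, α * (t - s) ^ (-α - 1) * (w t - w s))

/-- The elliptic operator `𝓛w = ∑_k (-a_k ∂²_{x_k} w + b_k ∂_{x_k} w) + c w`. -/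
noncomputable def ellOp {d : ℕ} (a b : Fin d → (Fin d → ℝ) → ℝ) (c : (Fin d → ℝ) → ℝ)
    (w : (Fin d → ℝ) → ℝ) (x : Fin d → ℝ) : ℝ :=
  (∑ k, (-(a k x) * fderiv ℝ (fun y => fderiv ℝ w y (Pi.single k 1)) x (Pi.single k 1)
      + b k x * fderiv ℝ w x (Pi.single k 1))) + c x * w x

/-!
Suppose `v` is negative somewhere. Its minimum over the compact cylinder `closure Ω × [0, T]` is
then attained at an interior point `x₀` and a positive time `t₀`. There the fractional derivative is
negative, because its kernel is nonnegative and `v x₀ t₀` lies below all earlier values and strictly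
below `v x₀ 0`; and the elliptic operator is nonpositive, because the gradient vanishes and pure
second derivatives are nonnegative at a spatial minimum. Their sum cannot be nonnegative.
-/

open Set Filter Topology

theorem deriv_deriv_nonneg_of_isLocalMin {g : ℝ → ℝ} {x : ℝ} (hmin : IsLocalMin g x)
    (hg : ContinuousAt g x) : 0 ≤ deriv (deriv g) x := by
  by_contra! hneg
  have hmax : IsLocalMax g x := isLocalMax_of_deriv_deriv_neg hneg hmin.deriv_eq_zero hg
  have hconst : g =ᶠ[𝓝 x] fun _ => g x := by
    filter_upwards [hmin, hmax] with y hle hge using le_antisymm hge hle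
  have hzero : deriv (deriv g) x = 0 := by
    rw [hconst.deriv.deriv_eq, deriv_const', deriv_const]
  exact hneg.ne hzero

section LineRestriction

variable {𝕜 E F : Type*} [NontriviallyNormedField 𝕜] [NormedAddCommGroup E] [NormedSpace 𝕜 E]
  [NormedAddCommGroup F] [NormedSpace 𝕜 F]

theorem hasDerivAt_comp_add_smul {f : E → F} {x e : E} {s : 𝕜}
    (hf : DifferentiableAt 𝕜 f (x + s • e)) :
    HasDerivAt (fun r : 𝕜 => f (x + r • e)) (fderiv 𝕜 f (x + s • e) e) s := by
  have hline : HasDerivAt (fun r : 𝕜 => x + r • e) e s := by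
    simpa using ((hasDerivAt_id s).smul_const e).const_add x
  exact hf.hasFDerivAt.comp_hasDerivAt s hline

theorem tendsto_add_smul_nhds_zero (x e : E) :
    Tendsto (fun s : 𝕜 => x + s • e) (𝓝 0) (𝓝 x) := by
  have hcont : Continuous fun s : 𝕜 => x + s • e := by fun_prop
  simpa using hcont.tendsto 0

theorem deriv_deriv_comp_add_smul {f : E → F} {x e : E}
    (hf : ∀ᶠ y in 𝓝 x, DifferentiableAt 𝕜 f y)
    (hf' : DifferentiableAt 𝕜 (fun y => fderiv 𝕜 f y e) x) :
    deriv (deriv fun s : 𝕜 => f (x + s • e)) 0 = fderiv 𝕜 (fun y => fderiv 𝕜 f y e) x e := by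
  have hfirst : (deriv fun s : 𝕜 => f (x + s • e)) =ᶠ[𝓝 0] fun s => fderiv 𝕜 f (x + s • e) e := by
    filter_upwards [(tendsto_add_smul_nhds_zero x e).eventually hf] with s hs
    exact (hasDerivAt_comp_add_smul hs).deriv
  have hsecond := hasDerivAt_comp_add_smul (f := fun y => fderiv 𝕜 f y e) (x := x) (e := e)
    (s := (0 : 𝕜)) (by simpa only [zero_smul, add_zero] using hf')
  rw [hfirst.deriv_eq, hsecond.deriv, zero_smul, add_zero]

end LineRestriction

theorem fderiv_fderiv_apply_nonneg_of_isLocalMin {E : Type*} [NormedAddCommGroup E]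
    [NormedSpace ℝ E] {w : E → ℝ} {x : E} (e : E) (hmin : IsLocalMin w x)
    (hw : ∀ᶠ y in 𝓝 x, DifferentiableAt ℝ w y)
    (hw' : DifferentiableAt ℝ (fun y => fderiv ℝ w y e) x) :
    0 ≤ fderiv ℝ (fun y => fderiv ℝ w y e) x e := by
  rw [← deriv_deriv_comp_add_smul hw hw']
  have htend := tendsto_add_smul_nhds_zero (𝕜 := ℝ) x e
  apply deriv_deriv_nonneg_of_isLocalMin
  · filter_upwards [htend.eventually hmin] with s hs
    simpa only [zero_smul, add_zero] using hs
  · have hx : DifferentiableAt ℝ w (x + (0 : ℝ) • e) := by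
      simpa only [zero_smul, add_zero] using hw.self_of_nhds
    exact (hasDerivAt_comp_add_smul hx).continuousAt

theorem ellOp_nonpos_of_isLocalMin {d : ℕ} {a b : Fin d → (Fin d → ℝ) → ℝ}
    {c w : (Fin d → ℝ) → ℝ} {x : Fin d → ℝ} (ha : ∀ k, 0 ≤ a k x) (hc : 0 ≤ c x)
    (hw : ContDiffAt ℝ 2 w x) (hmin : IsLocalMin w x) (hx : w x ≤ 0) :
    ellOp a b c w x ≤ 0 := by
  have hdiff : ∀ᶠ y in 𝓝 x, DifferentiableAt ℝ w y :=
    (hw.eventually (by simp)).mono fun y hy => hy.differentiableAt two_ne_zero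
  have hdiff' : DifferentiableAt ℝ (fderiv ℝ w) x :=
    (hw.fderiv_right (m := 1) (by norm_num)).differentiableAt one_ne_zero
  refine add_nonpos (Finset.sum_nonpos fun k _ => ?_) (mul_nonpos_of_nonneg_of_nonpos hc hx)
  have hsecond := fderiv_fderiv_apply_nonneg_of_isLocalMin (Pi.single k 1) hmin hdiff
    (hdiff'.clm_apply (differentiableAt_const _))
  rw [hmin.fderiv_eq_zero, zero_apply, mul_zero, add_zero, neg_mul]
  exact neg_nonpos.mpr (mul_nonneg (ha k) hsecond)

section FractionalDerivative

variable {α t : ℝ} {w : ℝ → ℝ}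

/-- The integrand of the memory term of `fracDer α w t`, singular at `s = t`. -/
noncomputable def caputoIntegrand (α : ℝ) (w : ℝ → ℝ) (t s : ℝ) : ℝ :=
  α * (t - s) ^ (-α - 1) * (w t - w s)

/-- The function `w` has a Caputo derivative of order `α` at time `t`, in the sense that the
integral in `fracDer` converges absolutely; otherwise the Bochner integral there takes the junk
value `0`. -/
def FracDifferentiableAt (α : ℝ) (w : ℝ → ℝ) (t : ℝ) : Prop :=
  IntegrableOn (caputoIntegrand α w t) (Ioo 0 t)

theorem continuousOn_caputoIntegrand {s : Set ℝ} (hs : ∀ r ∈ s, r < t) (hw : ContinuousOn w s) :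
    ContinuousOn (caputoIntegrand α w t) s := by
  have hkernel : ContinuousOn (fun r => (t - r) ^ (-α - 1)) s :=
    (continuousOn_const.sub continuousOn_id).rpow_const fun r hr => .inl (sub_pos.mpr (hs r hr)).ne'
  exact (hkernel.const_mul α).mul (continuousOn_const.sub hw)

theorem norm_caputoIntegrand_le {K : NNReal} {ε s : ℝ} (hw : LipschitzOnWith K w (Icc ε t))
    (hs : s ∈ Ico ε t) :
    ‖caputoIntegrand α w t s‖ ≤ |α| * K * (t - s) ^ (-α) := by
  have hpos : 0 < t - s := sub_pos.mpr hs.2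
  have hlip : |w t - w s| ≤ K * (t - s) := by
    simpa only [Real.dist_eq, abs_of_pos hpos] using
      hw.dist_le_mul t (right_mem_Icc.mpr (hs.1.trans hs.2.le)) s (Ico_subset_Icc_self hs)
  calc ‖caputoIntegrand α w t s‖
      = |α| * (t - s) ^ (-α - 1) * |w t - w s| := by
        rw [caputoIntegrand, norm_mul, norm_mul, norm_eq_abs, norm_eq_abs, norm_eq_abs,
          abs_of_nonneg (rpow_nonneg hpos.le _)]
    _ ≤ |α| * (t - s) ^ (-α - 1) * (K * (t - s)) := by gcongr
    _ = |α| * K * ((t - s) ^ (-α - 1) * (t - s)) := by ring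
    _ = |α| * K * (t - s) ^ (-α) := by
        rw [← rpow_add_one hpos.ne', sub_add_cancel]

theorem integrableOn_caputoIntegrand_of_lipschitzOnWith {K : NNReal} {ε : ℝ} (hα : α < 1)
    (hw : LipschitzOnWith K w (Icc ε t)) :
    IntegrableOn (caputoIntegrand α w t) (Ico ε t) := by
  rcases le_total t ε with hle | hle
  · simp only [Ico_eq_empty_of_le hle, integrableOn_empty]
  have hkernel : IntervalIntegrable (fun s => (t - s) ^ (-α)) volume ε t := by
    simpa using ((intervalIntegral.intervalIntegrable_rpow' (a := 0) (b := t - ε)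
      (r := -α) (by linarith)).comp_sub_left t).symm
  have hbound : IntegrableOn (fun s => |α| * K * (t - s) ^ (-α)) (Ico ε t) :=
    ((intervalIntegrable_iff_integrableOn_Ico_of_le hle).mp hkernel).const_mul _
  have hcont := continuousOn_caputoIntegrand (α := α) (fun r (hr : r ∈ Ico ε t) => hr.2)
    (hw.continuousOn.mono Ico_subset_Icc_self)
  refine hbound.mono' (hcont.aestronglyMeasurable measurableSet_Ico) ?_
  exact ae_restrict_of_forall_mem measurableSet_Ico fun s hs => norm_caputoIntegrand_le hw hs

theorem fracDifferentiableAt_of_lipschitzOnWith {K : NNReal} {ε : ℝ} (hα : α < 1) (hε : ε < t)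
    (hcont : ContinuousOn w (Icc 0 ε)) (hlip : LipschitzOnWith K w (Icc ε t)) :
    FracDifferentiableAt α w t := by
  have hfar : IntegrableOn (caputoIntegrand α w t) (Icc 0 ε) :=
    (continuousOn_caputoIntegrand (fun _ hr => hr.2.trans_lt hε) hcont).integrableOn_Icc
  refine (hfar.union (integrableOn_caputoIntegrand_of_lipschitzOnWith hα hlip)).mono_set ?_
  intro s hs
  rcases le_total s ε with hsε | hsε
  exacts [.inl ⟨hs.1.le, hsε⟩, .inr ⟨hsε, hs.2⟩]

theorem fracDifferentiableAt_of_forall_lipschitzOnWith {T : ℝ} (hα : α < 1) (ht : t ∈ Ioc 0 T)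
    (hcont : ContinuousOn w (Icc 0 T))
    (hlip : ∀ ε ∈ Ioo 0 T, ∃ K : NNReal, LipschitzOnWith K w (Icc ε T)) :
    FracDifferentiableAt α w t := by
  have hhalf : t / 2 < t := half_lt_self ht.1
  obtain ⟨K, hK⟩ := hlip (t / 2) ⟨half_pos ht.1, hhalf.trans_le ht.2⟩
  exact fracDifferentiableAt_of_lipschitzOnWith hα hhalf
    (hcont.mono (Icc_subset_Icc_right (hhalf.le.trans ht.2)))
    (hK.mono (Icc_subset_Icc_right ht.2))

theorem fracDer_neg_of_forall_le (hα₀ : 0 ≤ α) (hα₁ : α < 1) (ht : 0 < t) (h₀ : w t < w 0)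
    (hle : ∀ s ∈ Ioo 0 t, w t ≤ w s) : fracDer α w t < 0 := by
  have hΓ : 0 < 1 / Real.Gamma (1 - α) := one_div_pos.mpr (Gamma_pos_of_pos (sub_pos.mpr hα₁))
  have hinit : t ^ (-α) * (w t - w 0) < 0 :=
    mul_neg_of_pos_of_neg (rpow_pos_of_pos ht _) (sub_neg.mpr h₀)
  have hmemory : ∫ s in Ioo 0 t, caputoIntegrand α w t s ≤ 0 := by
    refine setIntegral_nonpos measurableSet_Ioo fun s hs => mul_nonpos_of_nonneg_of_nonpos ?_ ?_
    · exact mul_nonneg hα₀ (rpow_nonneg (sub_nonneg.mpr hs.2.le) _)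
    · exact sub_nonpos.mpr (hle s hs)
  exact mul_neg_of_pos_of_neg hΓ (add_neg_of_neg_of_nonpos hinit hmemory)

end FractionalDerivative

theorem exists_isMinOn_cylinder_of_neg {X R : Type*} [TopologicalSpace X] [LinearOrder R] [Zero R]
    {Ω : Set X} {T : ℝ} {v : X → ℝ → R} (hΩo : IsOpen Ω) (hΩc : IsCompact (closure Ω))
    (hv : LowerSemicontinuousOn (fun p : X × ℝ => v p.1 p.2) (closure Ω ×ˢ Icc 0 T))
    (hv0 : ∀ x ∈ Ω, 0 ≤ v x 0) (hvbd : ∀ x ∈ frontier Ω, ∀ t ∈ Icc 0 T, 0 ≤ v x t)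
    {x : X} {t : ℝ} (hx : x ∈ closure Ω) (ht : t ∈ Icc 0 T) (hneg : v x t < 0) :
    ∃ x₀ ∈ Ω, ∃ t₀ ∈ Ioc 0 T, v x₀ t₀ < 0 ∧
      ∀ y ∈ closure Ω, ∀ s ∈ Icc 0 T, v x₀ t₀ ≤ v y s := by
  have hne : (closure Ω ×ˢ Icc 0 T).Nonempty := ⟨(x, t), hx, ht⟩
  obtain ⟨⟨x₀, t₀⟩, ⟨hx₀, ht₀⟩, hmin⟩ := hv.exists_isMinOn hne (hΩc.prod isCompact_Icc)
  have hle : ∀ y ∈ closure Ω, ∀ s ∈ Icc 0 T, v x₀ t₀ ≤ v y s := fun y hy s hs =>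
    hmin (show (y, s) ∈ closure Ω ×ˢ Icc 0 T from ⟨hy, hs⟩)
  have hneg₀ : v x₀ t₀ < 0 := (hle x hx t ht).trans_lt hneg
  have hx₀Ω : x₀ ∈ Ω := by
    by_contra hnot
    have hfr : x₀ ∈ frontier Ω := by
      rw [hΩo.frontier_eq]
      exact ⟨hx₀, hnot⟩
    exact (hvbd x₀ hfr t₀ ht₀).not_gt hneg₀
  have ht₀pos : 0 < t₀ := by
    refine lt_of_le_of_ne ht₀.1 ?_
    rintro rfl
    exact (hv0 x₀ hx₀Ω).not_gt hneg₀
  exact ⟨x₀, hx₀Ω, t₀, ⟨ht₀pos, ht₀.2⟩, hneg₀, hle⟩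

theorem fractional_parabolic_maximum_principle_general {d : ℕ} {Ω : Set (Fin d → ℝ)}
    (hΩo : IsOpen Ω) (hΩb : Bornology.IsBounded Ω) {T α : ℝ} (hα : α ∈ Ioo (0 : ℝ) 1)
    {a b : Fin d → (Fin d → ℝ) → ℝ} {c : (Fin d → ℝ) → ℝ}
    (ha : ∀ k, ∀ x ∈ Ω, 0 ≤ a k x) (hc : ∀ x ∈ Ω, 0 ≤ c x) {v : (Fin d → ℝ) → ℝ → ℝ}
    (hv : LowerSemicontinuousOn (fun p : (Fin d → ℝ) × ℝ => v p.1 p.2) (closure Ω ×ˢ Icc 0 T))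
    (hv_x : ∀ t ∈ Ioc 0 T, ContDiffOn ℝ 2 (fun x => v x t) Ω)
    (hv0 : ∀ x ∈ Ω, 0 ≤ v x 0) (hvbd : ∀ x ∈ frontier Ω, ∀ t ∈ Icc 0 T, 0 ≤ v x t)
    (hineq : ∀ x ∈ Ω, ∀ t ∈ Ioc 0 T, FracDifferentiableAt α (v x) t ∧
      0 ≤ fracDer α (v x) t + ellOp a b c (fun y => v y t) x) :
    ∀ x ∈ closure Ω, ∀ t ∈ Icc 0 T, 0 ≤ v x t := by
  intro x hx t ht
  by_contra! hneg
  obtain ⟨x₀, hx₀, t₀, ht₀, hneg₀, hle⟩ :=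
    exists_isMinOn_cylinder_of_neg hΩo hΩb.isCompact_closure hv hv0 hvbd hx ht hneg
  have hΩ : Ω ∈ 𝓝 x₀ := hΩo.mem_nhds hx₀
  have hmin : IsLocalMin (fun y => v y t₀) x₀ :=
    mem_of_superset hΩ fun y hy => hle y (subset_closure hy) t₀ (Ioc_subset_Icc_self ht₀)
  have hell : ellOp a b c (fun y => v y t₀) x₀ ≤ 0 :=
    ellOp_nonpos_of_isLocalMin (fun k => ha k x₀ hx₀) (hc x₀ hx₀) ((hv_x t₀ ht₀).contDiffAt hΩ)
      hmin hneg₀.le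
  have hfrac : fracDer α (v x₀) t₀ < 0 :=
    fracDer_neg_of_forall_le hα.1.le hα.2 ht₀.1 (hneg₀.trans_le (hv0 x₀ hx₀)) fun s hs =>
      hle x₀ (subset_closure hx₀) s ⟨hs.1.le, hs.2.le.trans ht₀.2⟩
  exact (add_neg_of_neg_of_nonpos hfrac hell).not_ge (hineq x₀ hx₀ t₀ ht₀).2

/-- Maximum/comparison principle for the time-fractional parabolic operator
`D_t^α + 𝓛` (Lemma 3.1): `(D_t^α + 𝓛)v ≥ 0` in `Ω × (0,T]` together with `v ≥ 0`
on the parabolic boundary implies `v ≥ 0` everywhere. -/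
theorem fractional_parabolic_maximum_principle
    (d : ℕ) (hd : 1 ≤ d) (Ω : Set (Fin d → ℝ)) (hΩo : IsOpen Ω)
    (hΩb : Bornology.IsBounded Ω)
    (T α : ℝ) (hT : 0 < T) (hα : α ∈ Set.Ioo (0 : ℝ) 1)
    (a b : Fin d → (Fin d → ℝ) → ℝ) (c : (Fin d → ℝ) → ℝ)
    (ha_cont : ∀ k, ContinuousOn (a k) (closure Ω))
    (hb_cont : ∀ k, ContinuousOn (b k) (closure Ω))
    (hc_cont : ContinuousOn c (closure Ω))
    (ha_pos : ∀ k, ∀ x ∈ closure Ω, 0 < a k x)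
    (hc_nonneg : ∀ x ∈ closure Ω, 0 ≤ c x)
    (v : (Fin d → ℝ) → ℝ → ℝ)
    (hv_cont : ContinuousOn (fun p : (Fin d → ℝ) × ℝ => v p.1 p.2)
      (closure Ω ×ˢ Set.Icc 0 T))
    (hv_x : ∀ t ∈ Set.Ioc 0 T, ContDiffOn ℝ 2 (fun x => v x t) Ω)
    (hv_t : ∀ x ∈ Ω, ∀ ε ∈ Set.Ioo 0 T, ∃ K : NNReal, LipschitzOnWith K (v x) (Set.Icc ε T))
    (hv0 : ∀ x ∈ closure Ω, 0 ≤ v x 0)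
    (hvbd : ∀ x ∈ frontier Ω, ∀ t ∈ Set.Icc 0 T, 0 ≤ v x t)
    (hineq : ∀ x ∈ Ω, ∀ t ∈ Set.Ioc 0 T,
      0 ≤ fracDer α (v x) t + ellOp a b c (fun y => v y t) x) :
    ∀ x ∈ closure Ω, ∀ t ∈ Set.Icc 0 T, 0 ≤ v x t := by
  have hv_time : ∀ x ∈ Ω, ContinuousOn (v x) (Set.Icc 0 T) := fun x hx =>
    hv_cont.uncurry_left (f := v) x (subset_closure hx)
  exact fractional_parabolic_maximum_principle_general hΩo hΩb hα
    (fun k x hx => (ha_pos k x (subset_closure hx)).le)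
    (fun x hx => hc_nonneg x (subset_closure hx)) hv_cont.lowerSemicontinuousOn hv_x
    (fun x hx => hv0 x (subset_closure hx)) hvbd fun x hx t ht =>
      ⟨fracDifferentiableAt_of_forall_lipschitzOnWith hα.2 ht (hv_time x hx) (hv_t x hx),
        hineq x hx t ht⟩
end

section
/- Let α ∈ (0,1), λ ∈ ℝ, T > 0, and let v : [0,T] → ℝ be continuous. Define w(0) := 0 and w(t) := ∫_0^t (t−s)^{α−1} E_{α,α}(−λ(t−s)^α) v(s) ds for t ∈ (0,T]. Then w is continuous on [0,T] and satisfies, for every t ∈ [0,T], the Volterra integral equation w(t) + (λ/Γ(α)) ∫_0^t (t−s)^{α−1} w(s) ds = (1/Γ(α)) ∫_0^t (t−s)^{α−1} v(s) ds. -/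
open MeasureTheory Real

/-- The generalized Mittag-Leffler function `E_{a,b}(z) = ∑_{k≥0} z^k / Γ(ak + b)`. -/
noncomputable def mittagLeffler (a b z : ℝ) : ℝ := ∑' k : ℕ, z ^ k / Real.Gamma (a * k + b)

/-!
Expanding the Mittag-Leffler series and integrating termwise against `(x-s)^(r-1)` (Beta integrals)
shows that `J^r` maps the kernel `x^(b-1) E_{a,b}(c x^a)` to `x^(b+r-1) E_{a,b+r}(c x^a)`. Combined
with the recurrence `E_{a,b}(z) = 1/Γ(b) + z E_{a,a+b}(z)`, this says that
`K(x) = x^(α-1) E_{α,α}(-λ x^α)` is the resolvent of the Riemann–Liouville kernel: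
`K + λ J^α K = x^(α-1)/Γ(α)` on `x > 0`. Convolving this identity with `v` and using associativity
gives the Volterra equation for `w = K * v`.
-/

theorem memLp_top_restrict_Ioo_of_continuousOn_Icc {X E : Type*} [TopologicalSpace X]
    [Preorder X] [CompactIccSpace X] [MeasurableSpace X] [OpensMeasurableSpace X]
    [OrderClosedTopology X] [NormedAddCommGroup E] {μ : Measure X} {f : X → E} {a b : X}
    (hf : ContinuousOn f (Set.Icc a b)) : MemLp f ⊤ (μ.restrict (Set.Ioo a b)) := by
  obtain ⟨M, hM⟩ := isCompact_Icc.exists_bound_of_continuousOn hf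
  have hIcc : MemLp f ⊤ (μ.restrict (Set.Icc a b)) := by
    refine memLp_top_of_bound
      (hf.aestronglyMeasurable_of_isCompact isCompact_Icc measurableSet_Icc) M ?_
    filter_upwards [ae_restrict_mem measurableSet_Icc] with x hx using hM x hx
  exact hIcc.mono_measure (Measure.restrict_mono_set μ Set.Ioo_subset_Icc_self)

section Convolution

open scoped Convolution ENNReal

variable {G E E' F : Type*} [MeasurableSpace G] [AddGroup G] [MeasurableAdd₂ G] [MeasurableNeg G]
  {μ : Measure G} [SFinite μ] [μ.IsAddRightInvariant]
  [NormedAddCommGroup E] [NormedSpace ℝ E] [NormedAddCommGroup E'] [NormedSpace ℝ E']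
  [NormedAddCommGroup F] [NormedSpace ℝ F] (L : E →L[ℝ] E' →L[ℝ] F) {f : G → E} {g : G → E'}

theorem ae_norm_convolution_integrand_le (f : G → E) (hg : MemLp g ∞ μ) (x : G) :
    ∀ᵐ y ∂μ, ‖L (f y) (g (x - y))‖ ≤ ‖f y‖ * (‖L‖ * (eLpNorm g ∞ μ).toReal) := by
  filter_upwards [(quasiMeasurePreserving_sub_left_of_right_invariant μ x).ae
    (enorm_ae_le_eLpNormEssSup g μ)] with y hy
  rw [← eLpNorm_exponent_top] at hy
  have hgy : ‖g (x - y)‖ ≤ (eLpNorm g ∞ μ).toReal := by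
    simpa only [toReal_enorm] using ENNReal.toReal_mono hg.eLpNorm_ne_top hy
  calc ‖L (f y) (g (x - y))‖ ≤ ‖L‖ * ‖f y‖ * ‖g (x - y)‖ := L.le_opNorm₂ _ _
    _ ≤ ‖L‖ * ‖f y‖ * (eLpNorm g ∞ μ).toReal := by gcongr
    _ = ‖f y‖ * (‖L‖ * (eLpNorm g ∞ μ).toReal) := by ring

theorem convolutionExists_of_integrable_of_memLp_top (hf : Integrable f μ) (hg : MemLp g ∞ μ) :
    ConvolutionExists f g L μ := fun x =>
  (hf.norm.mul_const _).mono' (hf.1.convolution_integrand_snd L hg.1 x)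
    (ae_norm_convolution_integrand_le L f hg x)

theorem memLp_top_convolution (hf : Integrable f μ) (hg : MemLp g ∞ μ) :
    MemLp (f ⋆[L, μ] g) ∞ μ :=
  memLp_top_of_bound (hf.1.convolution_integrand L hg.1).integral_prod_right' _ <|
    .of_forall fun x =>
      norm_integral_le_of_norm_le (hf.norm.mul_const _) (ae_norm_convolution_integrand_le L f hg x)

theorem convolution_assoc_of_memLp_top {E'' F' F'' : Type*}
    [NormedAddCommGroup E''] [NormedSpace ℝ E''] [NormedAddCommGroup F'] [NormedSpace ℝ F']
    [NormedAddCommGroup F''] [NormedSpace ℝ F'']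
    [CompleteSpace F] [CompleteSpace F'] [CompleteSpace F'']
    (L₂ : F →L[ℝ] E'' →L[ℝ] F') (L₃ : E →L[ℝ] F'' →L[ℝ] F') (L₄ : E' →L[ℝ] E'' →L[ℝ] F'')
    (hL : ∀ x y z, L₂ (L x y) z = L₃ x (L₄ y z)) {k : G → E''}
    (hf : Integrable f μ) (hg : Integrable g μ) (hk : MemLp k ∞ μ) :
    (f ⋆[L, μ] g) ⋆[L₂, μ] k = f ⋆[L₃, μ] (g ⋆[L₄, μ] k) := by
  ext x
  exact convolution_assoc L L₂ L₃ L₄ hL hf.1 hg.1 hk.1 (hf.ae_convolution_exists L hg)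
    (.of_forall (convolutionExists_of_integrable_of_memLp_top _ hg.norm hk.norm))
    (convolutionExists_of_integrable_of_memLp_top _ hf.norm
      (memLp_top_convolution _ hg.norm hk.norm) x)

theorem continuous_convolution_of_ae_continuousAt [TopologicalSpace G] [ContinuousSub G]
    [FirstCountableTopology G] (hf : Integrable f μ) (hg : MemLp g ∞ μ)
    (hgc : ∀ᵐ x ∂μ, ContinuousAt g x) : Continuous (f ⋆[L, μ] g) := by
  refine continuous_iff_continuousAt.2 fun x₀ => continuousAt_of_dominated
    (.of_forall fun x => hf.1.convolution_integrand_snd L hg.1 x)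
    (.of_forall (ae_norm_convolution_integrand_le L f hg)) (hf.norm.mul_const _) ?_
  filter_upwards [(quasiMeasurePreserving_sub_left_of_right_invariant μ x₀).ae hgc] with y hy
  have hgy : ContinuousAt (fun x => g (x - y)) x₀ :=
    ContinuousAt.comp (f := fun x => x - y) hy (by fun_prop)
  exact (L (f y)).continuous.continuousAt.comp hgy

end Convolution

section Volterra

open ContinuousLinearMap (lsmul)
open scoped Convolution ENNReal

variable {E : Type*} [NormedAddCommGroup E] [NormedSpace ℝ E] {A B : ℝ → ℝ} {u : ℝ → E} {T t : ℝ}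

/-- The causal convolution `∫_0^t A(t-s) u(s) ds` on the half-line, with scalar kernel `A`. The
kernel `A(x) = x^(α-1)` gives the Riemann–Liouville integral `Γ(α) J^α u`. The integral runs over
the open interval, so that the value of a singular kernel at `0` is never used. -/
noncomputable def volterraConv (A : ℝ → ℝ) (u : ℝ → E) (t : ℝ) : E :=
  ∫ s in Set.Ioo 0 t, A (t - s) • u s

theorem volterraConv_congr {A' : ℝ → ℝ} {u' : ℝ → E} (hA : Set.EqOn A A' (Set.Ioo 0 t))
    (hu : Set.EqOn u u' (Set.Ioo 0 t)) : volterraConv A u t = volterraConv A' u' t :=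
  setIntegral_congr_fun measurableSet_Ioo fun s hs => by
    simp only [hA ⟨sub_pos.2 hs.2, sub_lt_self t hs.1⟩, hu hs]

theorem volterraConv_of_nonpos (A : ℝ → ℝ) (u : ℝ → E) (ht : t ≤ 0) : volterraConv A u t = 0 := by
  rw [volterraConv, Set.Ioo_eq_empty_of_le ht, Measure.restrict_empty, integral_zero_measure]

theorem volterraConv_smul_kernel (q : ℝ) (A : ℝ → ℝ) (u : ℝ → E) (t : ℝ) :
    volterraConv (q • A) u t = q • volterraConv A u t := by
  simp only [volterraConv, Pi.smul_apply, smul_assoc, integral_smul]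

theorem convolution_eq_volterraConv (hA : ∀ x ≤ 0, A x = 0) (hu : ∀ x ≤ 0, u x = 0) :
    A ⋆[lsmul ℝ ℝ] u = volterraConv A u := by
  ext t
  rw [convolution_lsmul_swap, volterraConv]
  refine (setIntegral_eq_integral_of_forall_compl_eq_zero fun s hs => ?_).symm
  rcases le_or_gt s 0 with hs₀ | hs₀
  · rw [hu s hs₀, smul_zero]
  · have hts : t ≤ s := le_of_not_gt fun h => hs ⟨hs₀, h⟩
    rw [hA (t - s) (sub_nonpos.2 hts), zero_smul]

theorem indicator_Ioo_of_nonpos {β : Type*} [Zero β] (f : ℝ → β) (T : ℝ) :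
    ∀ x ≤ 0, (Set.Ioo 0 T).indicator f x = 0 := fun _ hx =>
  Set.indicator_of_notMem (fun h => hx.not_gt h.1) f

theorem eqOn_indicator_Ioo {β : Type*} [Zero β] (f : ℝ → β) (ht : t ≤ T) :
    Set.EqOn f ((Set.Ioo 0 T).indicator f) (Set.Ioo 0 t) := fun _ hx =>
  (Set.indicator_of_mem (Set.Ioo_subset_Ioo_right ht hx) f).symm

theorem volterraConv_eq_convolution_indicator (A : ℝ → ℝ) (u : ℝ → E) (ht : t ≤ T) :
    volterraConv A u t =
      ((Set.Ioo 0 T).indicator A ⋆[lsmul ℝ ℝ] (Set.Ioo 0 T).indicator u) t := by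
  rw [convolution_eq_volterraConv (indicator_Ioo_of_nonpos A T) (indicator_Ioo_of_nonpos u T)]
  exact volterraConv_congr (eqOn_indicator_Ioo A ht) (eqOn_indicator_Ioo u ht)

theorem integrableOn_volterraConv (hA : IntegrableOn A (Set.Ioo 0 T))
    (hu : IntegrableOn u (Set.Ioo 0 T)) : IntegrableOn (volterraConv A u) (Set.Ioo 0 T) := by
  have hconv := (hA.integrable_indicator measurableSet_Ioo).integrable_convolution (lsmul ℝ ℝ)
    (hu.integrable_indicator measurableSet_Ioo)
  exact hconv.integrableOn.congr_fun
    (fun x hx => (volterraConv_eq_convolution_indicator A u hx.2.le).symm) measurableSet_Ioo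

theorem volterraConv_add_kernel (hA : IntegrableOn A (Set.Ioo 0 T))
    (hB : IntegrableOn B (Set.Ioo 0 T)) (hu : MemLp u ∞ (volume.restrict (Set.Ioo 0 T)))
    (ht : t ≤ T) : volterraConv (A + B) u t = volterraConv A u t + volterraConv B u t := by
  have hu₀ := (memLp_indicator_iff_restrict measurableSet_Ioo).2 hu
  have hexists : ∀ {C : ℝ → ℝ}, IntegrableOn C (Set.Ioo 0 T) → ConvolutionExistsAt
      ((Set.Ioo 0 T).indicator C) ((Set.Ioo 0 T).indicator u) t (lsmul ℝ ℝ) volume := fun hC =>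
    convolutionExists_of_integrable_of_memLp_top _ (hC.integrable_indicator measurableSet_Ioo) hu₀ t
  simp only [volterraConv_eq_convolution_indicator _ u ht, Set.indicator_add']
  exact (hexists hA).add_distrib (hexists hB)

theorem volterraConv_assoc [CompleteSpace E] (hA : IntegrableOn A (Set.Ioo 0 T))
    (hB : IntegrableOn B (Set.Ioo 0 T)) (hu : MemLp u ∞ (volume.restrict (Set.Ioo 0 T)))
    (ht : t ≤ T) : volterraConv (volterraConv A B) u t = volterraConv A (volterraConv B u) t := by
  set A₀ := (Set.Ioo 0 T).indicator A
  set B₀ := (Set.Ioo 0 T).indicator B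
  set u₀ := (Set.Ioo 0 T).indicator u
  have hA₀ : ∀ x ≤ 0, A₀ x = 0 := indicator_Ioo_of_nonpos A T
  have hB₀ : ∀ x ≤ 0, B₀ x = 0 := indicator_Ioo_of_nonpos B T
  have hu₀ : ∀ x ≤ 0, u₀ x = 0 := indicator_Ioo_of_nonpos u T
  have hassoc : volterraConv (volterraConv A₀ B₀) u₀ = volterraConv A₀ (volterraConv B₀ u₀) := by
    rw [← convolution_eq_volterraConv (fun _ => volterraConv_of_nonpos A₀ B₀) hu₀,
      ← convolution_eq_volterraConv hA₀ (fun _ => volterraConv_of_nonpos B₀ u₀),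
      ← convolution_eq_volterraConv hA₀ hB₀, ← convolution_eq_volterraConv hB₀ hu₀]
    exact convolution_assoc_of_memLp_top _ _ _ _ (fun x y z => smul_assoc x y z)
      (hA.integrable_indicator measurableSet_Ioo) (hB.integrable_indicator measurableSet_Ioo)
      ((memLp_indicator_iff_restrict measurableSet_Ioo).2 hu)
  calc volterraConv (volterraConv A B) u t
      = volterraConv (volterraConv A₀ B₀) u₀ t :=
        volterraConv_congr (fun x hx => volterraConv_congr
          (eqOn_indicator_Ioo A (hx.2.le.trans ht)) (eqOn_indicator_Ioo B (hx.2.le.trans ht)))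
          (eqOn_indicator_Ioo u ht)
    _ = volterraConv A₀ (volterraConv B₀ u₀) t := congrFun hassoc t
    _ = volterraConv A (volterraConv B u) t :=
        (volterraConv_congr (eqOn_indicator_Ioo A ht) fun x hx => volterraConv_congr
          (eqOn_indicator_Ioo B (hx.2.le.trans ht)) (eqOn_indicator_Ioo u (hx.2.le.trans ht))).symm

theorem volterraConv_add_smul_volterraConv_of_resolvent [CompleteSpace E] {K : ℝ → ℝ} {p q : ℝ}
    (hA : IntegrableOn A (Set.Ioo 0 T)) (hK : IntegrableOn K (Set.Ioo 0 T))
    (hAK : Set.EqOn (K + p • volterraConv A K) (q • A) (Set.Ioo 0 T))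
    (hu : MemLp u ∞ (volume.restrict (Set.Ioo 0 T))) (ht : t ≤ T) :
    volterraConv K u t + p • volterraConv A (volterraConv K u) t = q • volterraConv A u t := by
  calc volterraConv K u t + p • volterraConv A (volterraConv K u) t
      = volterraConv K u t + volterraConv (p • volterraConv A K) u t := by
        rw [volterraConv_smul_kernel, volterraConv_assoc hA hK hu ht]
    _ = volterraConv (K + p • volterraConv A K) u t :=
        (volterraConv_add_kernel hK ((integrableOn_volterraConv hA hK).smul p) hu ht).symm
    _ = volterraConv (q • A) u t :=
        volterraConv_congr (hAK.mono (Set.Ioo_subset_Ioo_right ht)) (Set.eqOn_refl u _)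
    _ = q • volterraConv A u t := volterraConv_smul_kernel q A u t

theorem continuousOn_volterraConv (hA : IntegrableOn A (Set.Ioo 0 T))
    (hu : ContinuousOn u (Set.Icc 0 T)) : ContinuousOn (volterraConv A u) (Set.Icc 0 T) := by
  have hu₀ : MemLp ((Set.Ioo 0 T).indicator u) ∞ volume :=
    (memLp_indicator_iff_restrict measurableSet_Ioo).2
      (memLp_top_restrict_Ioo_of_continuousOn_Icc hu)
  have hcont : ∀ᵐ x, ContinuousAt ((Set.Ioo 0 T).indicator u) x := by
    filter_upwards [measure_eq_zero_iff_ae_notMem.1 ((convex_Ioo 0 T).addHaar_frontier volume)]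
      with x hx
    exact (hu.mono (interior_subset.trans Set.Ioo_subset_Icc_self)).continuousAt_indicator hx
  have hconv : Continuous ((Set.Ioo 0 T).indicator A ⋆[lsmul ℝ ℝ] (Set.Ioo 0 T).indicator u) :=
    continuous_convolution_of_ae_continuousAt _ (hA.integrable_indicator measurableSet_Ioo) hu₀
      hcont
  exact hconv.continuousOn.congr fun t ht => volterraConv_eq_convolution_indicator A u ht.2

end Volterra

section MittagLeffler

variable {a b : ℝ}

theorem rpow_mul_exp_neg_le_Gamma {x c : ℝ} (hx : 1 ≤ x) (hc : 0 ≤ c) :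
    c ^ (x - 1) * exp (-c) ≤ Real.Gamma x := by
  have hx₀ : 0 < x := by linarith
  have hΓ := Real.GammaIntegral_convergent hx₀
  have hsub : Set.Ioi c ⊆ Set.Ioi (0 : ℝ) := Set.Ioi_subset_Ioi hc
  calc c ^ (x - 1) * exp (-c) = ∫ t in Set.Ioi c, exp (-t) * c ^ (x - 1) := by
        rw [integral_mul_const, integral_exp_neg_Ioi, mul_comm]
    _ ≤ ∫ t in Set.Ioi c, exp (-t) * t ^ (x - 1) := by
        refine setIntegral_mono_on ((integrableOn_exp_neg_Ioi c).mul_const _) (hΓ.mono_set hsub)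
          measurableSet_Ioi fun t (ht : c < t) => ?_
        gcongr
    _ ≤ ∫ t in Set.Ioi 0, exp (-t) * t ^ (x - 1) := by
        refine setIntegral_mono_set hΓ ?_ hsub.eventuallyLE
        filter_upwards [ae_restrict_mem measurableSet_Ioi] with t (ht : 0 < t)
        exact mul_nonneg (exp_pos _).le (rpow_nonneg ht.le _)
    _ = Real.Gamma x := (Real.Gamma_eq_integral hx₀).symm

theorem summable_pow_div_Gamma (ha : 0 < a) (b z : ℝ) :
    Summable fun k : ℕ => z ^ k / Real.Gamma (a * k + b) := by
  obtain ⟨c, hcz, hc⟩ : ∃ c : ℝ, 2 * |z| ≤ c ^ a ∧ 0 < c :=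
    (((tendsto_rpow_atTop ha).eventually_ge_atTop _).and (Filter.eventually_gt_atTop 0)).exists
  have hgeom : Summable fun k : ℕ => c ^ (1 - b) * exp c * (1 / 2 : ℝ) ^ k :=
    (summable_geometric_of_lt_one (by norm_num) (by norm_num)).mul_left _
  have harg : Filter.Tendsto (fun k : ℕ => a * k + b) .atTop .atTop :=
    Filter.tendsto_atTop_add_const_right _ _ (tendsto_natCast_atTop_atTop.const_mul_atTop ha)
  refine .of_norm_bounded_eventually_nat hgeom ?_
  filter_upwards [harg.eventually_ge_atTop 1] with k hk
  have hΓ := rpow_mul_exp_neg_le_Gamma hk hc.le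
  have hΓ₀ : 0 < Real.Gamma (a * k + b) := Real.Gamma_pos_of_pos (by linarith)
  have hpow : |z| ^ k ≤ c ^ (a * k) * (1 / 2) ^ k := by
    rw [rpow_mul hc.le, rpow_natCast, ← mul_pow]
    gcongr
    linarith
  have hone : 1 ≤ exp c * c ^ (1 - b - a * k) * Real.Gamma (a * k + b) := by
    calc (1 : ℝ) = exp c * c ^ (1 - b - a * k) * (c ^ (a * k + b - 1) * exp (-c)) := by
          rw [show 1 - b - a * k = -(a * k + b - 1) by ring, rpow_neg hc.le, exp_neg]
          field_simp
      _ ≤ _ := by gcongr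
  rw [norm_div, norm_pow, norm_eq_abs, norm_of_nonneg hΓ₀.le, div_le_iff₀ hΓ₀]
  calc |z| ^ k ≤ c ^ (a * k) * (1 / 2) ^ k * 1 := by rwa [mul_one]
    _ ≤ c ^ (a * k) * (1 / 2) ^ k * (exp c * c ^ (1 - b - a * k) * Real.Gamma (a * k + b)) := by
        gcongr
    _ = c ^ (a * k + (1 - b - a * k)) * exp c * (1 / 2) ^ k * Real.Gamma (a * k + b) := by
        rw [rpow_add hc]
        ring
    _ = c ^ (1 - b) * exp c * (1 / 2) ^ k * Real.Gamma (a * k + b) := by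
        rw [add_sub_cancel]

theorem continuous_mittagLeffler (ha : 0 < a) (b : ℝ) : Continuous (mittagLeffler a b) := by
  refine continuous_iff_continuousAt.2 fun z₀ => ?_
  have hball : ContinuousOn (mittagLeffler a b) (Metric.ball 0 (|z₀| + 1)) := by
    refine continuousOn_tsum (fun k => by fun_prop)
      (summable_pow_div_Gamma ha b (|z₀| + 1)).norm fun k z hz => ?_
    have hz' : ‖z‖ ≤ ‖|z₀| + 1‖ :=
      (mem_ball_zero_iff.1 hz).le.trans (le_norm_self _)
    rw [norm_div, norm_div, norm_pow, norm_pow]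
    gcongr
  exact hball.continuousAt (Metric.isOpen_ball.mem_nhds (by simp))

theorem mittagLeffler_eq_inv_Gamma_add (ha : 0 < a) (b z : ℝ) :
    mittagLeffler a b z = (Real.Gamma b)⁻¹ + z * mittagLeffler a (a + b) z := by
  rw [mittagLeffler, (summable_pow_div_Gamma ha b z).tsum_eq_zero_add, mittagLeffler,
    ← tsum_mul_left]
  congr 1
  · simp
  · refine tsum_congr fun k => ?_
    rw [show a * (k + 1 : ℕ) + b = a * k + (a + b) by push_cast; ring]
    ring

/-- The function `x ↦ x^(b-1) E_{a,b}(c x^a)`; the solution operator of `D^a w + λ w = v` is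
convolution with the case `b = a`, `c = -λ`. -/
noncomputable def mittagLefflerKernel (a b c x : ℝ) : ℝ :=
  x ^ (b - 1) * mittagLeffler a b (c * x ^ a)

theorem hasSum_mittagLefflerKernel (ha : 0 < a) (b c : ℝ) {x : ℝ} (hx : 0 < x) :
    HasSum (fun k : ℕ => c ^ k / Real.Gamma (a * k + b) * x ^ (a * k + b - 1))
      (mittagLefflerKernel a b c x) := by
  have hterm (k : ℕ) : c ^ k / Real.Gamma (a * k + b) * x ^ (a * k + b - 1) =
      x ^ (b - 1) * ((c * x ^ a) ^ k / Real.Gamma (a * k + b)) := by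
    rw [add_sub_assoc, rpow_add hx, rpow_mul hx.le, rpow_natCast, mul_pow]
    ring
  simpa only [hterm] using! (summable_pow_div_Gamma ha b (c * x ^ a)).hasSum.mul_left (x ^ (b - 1))

theorem mittagLefflerKernel_eq_rpow_add (ha : 0 < a) (b c : ℝ) {x : ℝ} (hx : 0 < x) :
    mittagLefflerKernel a b c x =
      x ^ (b - 1) / Real.Gamma b + c * mittagLefflerKernel a (a + b) c x := by
  rw [mittagLefflerKernel, mittagLefflerKernel, mittagLeffler_eq_inv_Gamma_add ha,
    show a + b - 1 = a + (b - 1) by ring, rpow_add hx]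
  ring

theorem integrableOn_mittagLefflerKernel (ha : 0 < a) (hb : 0 < b) (c T : ℝ) :
    IntegrableOn (mittagLefflerKernel a b c) (Set.Ioo 0 T) := by
  have hE : Continuous fun x : ℝ => mittagLeffler a b (c * x ^ a) :=
    (continuous_mittagLeffler ha b).comp (continuous_const.mul (continuous_rpow_const ha.le))
  exact ((intervalIntegral.intervalIntegrable_rpow' (by linarith)).mul_continuousOn
    hE.continuousOn).1.mono_set Set.Ioo_subset_Ioc_self

theorem integral_sub_rpow_mul_rpow (ha : 0 < a) (hb : 0 < b) {x : ℝ} (hx : 0 < x) :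
    ∫ s in Set.Ioo 0 x, (x - s) ^ (a - 1) * s ^ (b - 1)
      = Real.Gamma a * Real.Gamma b / Real.Gamma (a + b) * x ^ (a + b - 1) := by
  rw [← integral_Ioc_eq_integral_Ioo, ← intervalIntegral.integral_of_le hx.le]
  apply Complex.ofReal_injective
  have hcast : ∀ s ∈ Set.uIcc 0 x, (((x - s) ^ (a - 1) * s ^ (b - 1) : ℝ) : ℂ)
      = (s : ℂ) ^ ((b : ℂ) - 1) * ((x : ℂ) - s) ^ ((a : ℂ) - 1) := by
    intro s hs
    rw [Set.uIcc_of_le hx.le] at hs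
    rw [mul_comm, Complex.ofReal_mul, Complex.ofReal_cpow hs.1,
      Complex.ofReal_cpow (sub_nonneg.2 hs.2)]
    push_cast
    rfl
  rw [← intervalIntegral.integral_ofReal, intervalIntegral.integral_congr hcast,
    Complex.betaIntegral_scaled _ _ hx,
    Complex.betaIntegral_eq_Gamma_mul_div _ _ (by simpa) (by simpa),
    ← Complex.ofReal_add, add_comm b a]
  push_cast [Complex.ofReal_cpow hx.le, ← Complex.Gamma_ofReal]
  ring

theorem integrableOn_sub_rpow_mul_rpow (ha : 0 < a) (hb : 0 < b) {x : ℝ} (hx : 0 < x) :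
    IntegrableOn (fun s => (x - s) ^ (a - 1) * s ^ (b - 1)) (Set.Ioo 0 x) := by
  refine .of_integral_ne_zero ?_
  rw [integral_sub_rpow_mul_rpow ha hb hx]
  have := Real.Gamma_pos_of_pos ha
  have := Real.Gamma_pos_of_pos hb
  have := Real.Gamma_pos_of_pos (add_pos ha hb)
  positivity

theorem volterraConv_rpow_mittagLefflerKernel {r x : ℝ} (hr : 0 < r) (ha : 0 < a) (hb : 0 < b)
    (c : ℝ) (hx : 0 < x) :
    volterraConv (fun y => y ^ (r - 1)) (mittagLefflerKernel a b c) x =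
      Real.Gamma r * mittagLefflerKernel a (r + b) c x := by
  let term (d : ℝ) (k : ℕ) (s : ℝ) : ℝ :=
    d ^ k / Real.Gamma (a * k + b) * ((x - s) ^ (r - 1) * s ^ (a * k + b - 1))
  have hpos (k : ℕ) : 0 < a * k + b := by positivity
  have hΓ (k : ℕ) : 0 < Real.Gamma (a * k + b) := Real.Gamma_pos_of_pos (hpos k)
  have hterm_integrable (k : ℕ) : IntegrableOn (term c k) (Set.Ioo 0 x) :=
    (integrableOn_sub_rpow_mul_rpow hr (hpos k) hx).const_mul _
  have hterm_integral (d : ℝ) (k : ℕ) : ∫ s in Set.Ioo 0 x, term d k s =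
      Real.Gamma r * (d ^ k / Real.Gamma (a * k + (r + b)) * x ^ (a * k + (r + b) - 1)) := by
    rw [integral_const_mul, integral_sub_rpow_mul_rpow hr (hpos k) hx,
      show r + (a * k + b) = a * k + (r + b) by ring]
    field_simp [(hΓ k).ne']
  have hterm_norm (k : ℕ) : ∫ s in Set.Ioo 0 x, ‖term c k s‖ = ∫ s in Set.Ioo 0 x, term |c| k s :=
    setIntegral_congr_fun measurableSet_Ioo fun s hs => by
      have hs₀ : 0 ≤ s := hs.1.le
      have hxs : 0 ≤ x - s := sub_nonneg.2 hs.2.le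
      simp only [term, norm_mul, norm_div, norm_pow, norm_eq_abs, abs_of_pos (hΓ k),
        abs_of_nonneg (rpow_nonneg hs₀ _), abs_of_nonneg (rpow_nonneg hxs _)]
  have hsummable : Summable fun k => ∫ s in Set.Ioo 0 x, ‖term c k s‖ := by
    simp only [hterm_norm, hterm_integral]
    exact (hasSum_mittagLefflerKernel ha (r + b) |c| hx).summable.mul_left _
  have hseries : Set.EqOn (fun s => (x - s) ^ (r - 1) • mittagLefflerKernel a b c s)
      (fun s => ∑' k, term c k s) (Set.Ioo 0 x) := fun s hs => by
    simp only [smul_eq_mul, ← (hasSum_mittagLefflerKernel ha b c hs.1).tsum_eq, ← tsum_mul_left]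
    exact tsum_congr fun k => mul_left_comm _ _ _
  rw [volterraConv, setIntegral_congr_fun measurableSet_Ioo hseries,
    ← integral_tsum_of_summable_integral_norm hterm_integrable hsummable,
    ← (hasSum_mittagLefflerKernel ha (r + b) c hx).tsum_eq, ← tsum_mul_left]
  exact tsum_congr (hterm_integral c)

theorem mittagLefflerKernel_resolvent {α : ℝ} (hα : 0 < α) (lam : ℝ) :
    Set.EqOn (mittagLefflerKernel α α (-lam) + (lam / Real.Gamma α) •
        volterraConv (fun x => x ^ (α - 1)) (mittagLefflerKernel α α (-lam)))
      ((1 / Real.Gamma α) • fun x => x ^ (α - 1)) (Set.Ioi 0) := fun x (hx : 0 < x) => by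
  have hΓ := (Real.Gamma_pos_of_pos hα).ne'
  simp only [Pi.add_apply, Pi.smul_apply, smul_eq_mul,
    volterraConv_rpow_mittagLefflerKernel hα hα hα _ hx]
  rw [mittagLefflerKernel_eq_rpow_add hα α _ hx]
  field_simp
  ring

end MittagLeffler

theorem solution_operator_solves_volterra_general {E : Type*} [NormedAddCommGroup E]
    [NormedSpace ℝ E] [CompleteSpace E] {α lam T : ℝ} (hα : 0 < α) {v w : ℝ → E}
    (hv : ContinuousOn v (Set.Icc 0 T)) (hw0 : w 0 = 0)
    (hw : ∀ t ∈ Set.Ioc 0 T,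
      w t = ∫ s in Set.Ioo 0 t,
        ((t - s) ^ (α - 1) * mittagLeffler α α (-lam * (t - s) ^ α)) • v s) :
    ContinuousOn w (Set.Icc 0 T) ∧
    ∀ t ∈ Set.Icc 0 T,
      w t + (lam / Real.Gamma α) • ∫ s in Set.Ioo 0 t, (t - s) ^ (α - 1) • w s
        = (1 / Real.Gamma α) • ∫ s in Set.Ioo 0 t, (t - s) ^ (α - 1) • v s := by
  have hK := integrableOn_mittagLefflerKernel hα hα (-lam) T
  have hA : IntegrableOn (fun x : ℝ => x ^ (α - 1)) (Set.Ioo 0 T) :=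
    (intervalIntegral.intervalIntegrable_rpow' (by linarith)).1.mono_set Set.Ioo_subset_Ioc_self
  have hv' : MemLp v ⊤ (volume.restrict (Set.Ioo 0 T)) :=
    memLp_top_restrict_Ioo_of_continuousOn_Icc hv
  have hwK : Set.EqOn w (volterraConv (mittagLefflerKernel α α (-lam)) v) (Set.Icc 0 T) := by
    rintro t ⟨ht₀, htT⟩
    rcases ht₀.eq_or_lt with rfl | ht₀
    · rw [hw0, volterraConv_of_nonpos _ _ le_rfl]
    · exact hw t ⟨ht₀, htT⟩
  refine ⟨(continuousOn_volterraConv hK hv).congr hwK, fun t ht => ?_⟩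
  change w t + _ • volterraConv (fun x => x ^ (α - 1)) w t =
    _ • volterraConv (fun x => x ^ (α - 1)) v t
  rw [hwK ht, volterraConv_congr (Set.eqOn_refl _ _)
    (hwK.mono (Set.Ioo_subset_Icc_self.trans (Set.Icc_subset_Icc_right ht.2)))]
  exact volterraConv_add_smul_volterraConv_of_resolvent hA hK
    ((mittagLefflerKernel_resolvent hα lam).mono Set.Ioo_subset_Ioi_self) hv' ht.2

/-- `w(t) = ∫_0^t (t-s)^(α-1) E_{α,α}(-λ(t-s)^α) v(s) ds` (with `w(0) = 0`) is
continuous and solves the Volterra integral equation `w + λ J^α w = J^α v`,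
the integral formulation of `D_t^α w + λ w = v`, `w(0) = 0`. -/
theorem solution_operator_solves_volterra
    (α lam T : ℝ) (hα : α ∈ Set.Ioo (0 : ℝ) 1) (hT : 0 < T)
    (v w : ℝ → ℝ)
    (hv : ContinuousOn v (Set.Icc 0 T))
    (hw0 : w 0 = 0)
    (hw : ∀ t ∈ Set.Ioc 0 T,
      w t = ∫ s in Set.Ioo 0 t,
        (t - s) ^ (α - 1) * mittagLeffler α α (-lam * (t - s) ^ α) * v s) :
    ContinuousOn w (Set.Icc 0 T) ∧
    ∀ t ∈ Set.Icc 0 T,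
      w t + (lam / Real.Gamma α) * ∫ s in Set.Ioo 0 t, (t - s) ^ (α - 1) * w s
        = (1 / Real.Gamma α) * ∫ s in Set.Ioo 0 t, (t - s) ^ (α - 1) * v s :=
  solution_operator_solves_volterra_general hα.1 hv hw0 hw
end

section
/- Let α ∈ (0,1). Then for every real number x (in particular for every x < 0), the generalized Mittag-Leffler function value E_{α,α}(x) := ∑_{k=0}^∞ x^k / Γ(α k + α) is strictly positive. -/
open Real

/-!
By Newton's series `(1 - X) ^ (-s) = ∑ₙ multichoose s n * X ^ n`, the coefficients `cₙ` of
`(1 - X) ^ (a - b) / ((1 - X) ^ a - z)` satisfy a recurrence expressing `(1 - z) * cₙ` through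
`c₀, …, cₙ₋₁`. For `0 ≤ a ≤ 1` and `a ≤ b` all weights of this recurrence are nonnegative, so `cₙ`
is nonnegative and monotone in `z`. With `z = x / n ^ a`, Euler's limit formula for `Γ` turns the
rescaled coefficients into `E_{a,b}(x)` as `n → ∞`; domination comes from the monotonicity of
Euler's sequence. Hence `E_{a,b}` is nonnegative and monotone on `ℝ`. A zero would make it vanish on
a whole half-line, hence everywhere by analyticity, although `E_{a,b}(0) = 1 / Γ(b)`.
-/

open Filter Finset Polynomial Topology

section Multichoose

theorem multichoose_add {R : Type*} [CommRing R] [BinomialRing R] (r s : R) (n : ℕ) :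
    Ring.multichoose (r + s) n =
      ∑ ij ∈ antidiagonal n, Ring.multichoose r ij.1 * Ring.multichoose s ij.2 := by
  have vandermonde := Ring.add_choose_eq n (Commute.all (-r) (-s))
  rw [← neg_add, Ring.choose_neg'] at vandermonde
  refine smul_left_cancel (Int.negOnePow n) (vandermonde.trans ?_)
  rw [smul_sum]
  refine sum_congr rfl fun ij hij ↦ ?_
  rw [Ring.choose_neg', Ring.choose_neg', smul_mul_smul_comm, ← Int.negOnePow_add,
    ← Nat.cast_add, mem_antidiagonal.1 hij]

theorem multichoose_eq_prod_div_factorial {K : Type*} [Field K] [CharZero K] (s : K) (n : ℕ) :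
    Ring.multichoose s n = (∏ j ∈ range n, (s + j)) / n.factorial := by
  have prod_eq_eval : ∏ j ∈ range n, (s + j) = (ascPochhammer K n).eval s := by
    induction n with
    | zero => simp
    | succ n ih => rw [prod_range_succ, ih, ascPochhammer_succ_eval]
  rw [prod_eq_eval, ← ascPochhammer_smeval_eq_eval,
    eq_div_iff (mod_cast n.factorial_ne_zero), mul_comm, ← nsmul_eq_mul,
    Ring.factorial_nsmul_multichoose_eq_ascPochhammer]

variable {K : Type*} [Field K] [LinearOrder K] [IsStrictOrderedRing K]

theorem multichoose_nonneg {s : K} (hs : 0 ≤ s) (n : ℕ) : 0 ≤ Ring.multichoose s n := by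
  rw [multichoose_eq_prod_div_factorial]
  positivity

theorem multichoose_neg_nonpos {a : K} (ha₀ : 0 ≤ a) (ha₁ : a ≤ 1) {n : ℕ} (hn : n ≠ 0) :
    Ring.multichoose (-a) n ≤ 0 := by
  obtain ⟨n, rfl⟩ := Nat.exists_eq_succ_of_ne_zero hn
  rw [multichoose_eq_prod_div_factorial, prod_range_succ']
  have shifted_factors_nonneg : 0 ≤ ∏ j ∈ range n, (-a + ↑(j + 1)) := by
    refine prod_nonneg fun j _ ↦ ?_
    push_cast
    linarith [j.cast_nonneg (α := K)]
  refine div_nonpos_of_nonpos_of_nonneg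
    (mul_nonpos_of_nonneg_of_nonpos shifted_factors_nonneg ?_) (by positivity)
  simpa using ha₀

end Multichoose

section Summability

theorem summable_pow_mul_eval {R : Type*} [NormedCommRing R] [HasSummableGeomSeries R] (P : R[X])
    {z : R} (hz : ‖z‖ < 1) : Summable fun k : ℕ ↦ z ^ k * P.eval (k : R) := by
  simp only [eval_eq_sum, Polynomial.sum, mul_sum]
  refine summable_sum fun i _ ↦ ?_
  exact ((summable_pow_mul_geometric_of_norm_lt_one i hz).mul_left (P.coeff i)).congr
    fun k ↦ by ring

theorem summable_pow_mul_multichoose (a b : ℝ) (n : ℕ) {z : ℝ} (hz : |z| < 1) :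
    Summable fun k : ℕ ↦ z ^ k * Ring.multichoose (a * k + b) n := by
  let risingFactorial : ℝ[X] := ∏ j ∈ range n, (C a * X + C b + C (j : ℝ))
  refine ((summable_pow_mul_eval risingFactorial hz).div_const (n.factorial : ℝ)).congr fun k ↦ ?_
  simp only [risingFactorial, multichoose_eq_prod_div_factorial, eval_prod, eval_add, eval_mul,
    eval_C, eval_X, mul_div_assoc]

end Summability

section Resolvent

/-- The coefficient of `X ^ n` in
`(1 - X) ^ (a - b) / ((1 - X) ^ a - z) = ∑ₖ z ^ k * (1 - X) ^ (-(a * k + b))`, the discrete analogue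
of the Mittag-Leffler function. It is meant for `|z| < 1`, where the series converges. -/
noncomputable def resolventCoeff (a b z : ℝ) (n : ℕ) : ℝ :=
  ∑' k : ℕ, z ^ k * Ring.multichoose (a * k + b) n

-- The convolution is multiplication by `(1 - X) ^ a`.
theorem sum_multichoose_neg_mul_resolventCoeff (a b : ℝ) {z : ℝ} (hz : |z| < 1) (n : ℕ) :
    ∑ ij ∈ antidiagonal n, resolventCoeff a b z ij.1 * Ring.multichoose (-a) ij.2 =
      Ring.multichoose (b - a) n + z * resolventCoeff a b z n := by
  calc
    _ = ∑' k : ℕ, z ^ k * Ring.multichoose (a * k + (b - a)) n := by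
      simp only [resolventCoeff, ← tsum_mul_right]
      rw [← Summable.tsum_finsetSum fun ij _ ↦
        (summable_pow_mul_multichoose a b ij.1 hz).mul_right _]
      refine tsum_congr fun k ↦ ?_
      rw [← add_sub_assoc, sub_eq_add_neg, multichoose_add, mul_sum]
      simp only [mul_assoc]
    _ = _ := by
      rw [(summable_pow_mul_multichoose a (b - a) n hz).tsum_eq_zero_add, resolventCoeff,
        ← tsum_mul_left]
      simp only [pow_zero, one_mul, Nat.cast_zero, mul_zero, zero_add, pow_succ', mul_assoc]
      congr! 6 with k
      push_cast
      ring

theorem one_sub_mul_resolventCoeff (a b : ℝ) {z : ℝ} (hz : |z| < 1) (n : ℕ) :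
    (1 - z) * resolventCoeff a b z n = Ring.multichoose (b - a) n +
      ∑ i ∈ range n, resolventCoeff a b z i * -Ring.multichoose (-a) (n - i) := by
  have convolution := sum_multichoose_neg_mul_resolventCoeff a b hz n
  rw [Nat.sum_antidiagonal_eq_sum_range_succ_mk, sum_range_succ, Nat.sub_self,
    Ring.multichoose_zero_right, mul_one] at convolution
  simp only [mul_neg, sum_neg_distrib]
  linarith

variable {a b : ℝ}

theorem resolventCoeff_nonneg (ha₀ : 0 ≤ a) (ha₁ : a ≤ 1) (hab : a ≤ b) {z : ℝ} (hz : |z| < 1)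
    (n : ℕ) : 0 ≤ resolventCoeff a b z n := by
  induction n using Nat.strong_induction_on with
  | _ n ih =>
    refine nonneg_of_mul_nonneg_right ?_ (sub_pos.2 (abs_lt.1 hz).2)
    rw [one_sub_mul_resolventCoeff a b hz]
    refine add_nonneg (multichoose_nonneg (sub_nonneg.2 hab) n) (sum_nonneg fun i hi ↦ ?_)
    have hin := mem_range.1 hi
    exact mul_nonneg (ih i hin)
      (neg_nonneg.2 (multichoose_neg_nonpos ha₀ ha₁ (Nat.sub_ne_zero_of_lt hin)))

theorem resolventCoeff_mono (ha₀ : 0 ≤ a) (ha₁ : a ≤ 1) (hab : a ≤ b) {z w : ℝ}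
    (hz : |z| < 1) (hw : |w| < 1) (hzw : z ≤ w) (n : ℕ) :
    resolventCoeff a b z n ≤ resolventCoeff a b w n := by
  induction n using Nat.strong_induction_on with
  | _ n ih =>
    refine le_of_mul_le_mul_left ?_ (sub_pos.2 (abs_lt.1 hz).2)
    calc
      (1 - z) * resolventCoeff a b z n ≤ (1 - w) * resolventCoeff a b w n := by
        rw [one_sub_mul_resolventCoeff a b hz, one_sub_mul_resolventCoeff a b hw]
        gcongr with i hi
        · have hin := mem_range.1 hi
          exact neg_nonneg.2 (multichoose_neg_nonpos ha₀ ha₁ (Nat.sub_ne_zero_of_lt hin))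
        · exact ih i (mem_range.1 hi)
      _ ≤ (1 - z) * resolventCoeff a b w n := by
        gcongr
        exact resolventCoeff_nonneg ha₀ ha₁ hab hw n

end Resolvent

section EulerLimit

theorem rpow_mul_add_le_add_one_rpow {x s : ℝ} (hx : 0 ≤ x) (hs : 0 ≤ s) :
    x ^ s * (x + 1 + s) ≤ (x + 1) ^ (s + 1) := by
  have hs' : 0 < s + 1 := by positivity
  have am_gm : x ^ (s / (s + 1)) * (x + 1 + s) ^ (1 / (s + 1)) ≤ x + 1 := by
    refine (Real.geom_mean_le_arith_mean2_weighted (by positivity) (by positivity) hx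
      (by positivity) (by field_simp)).trans_eq ?_
    field_simp
    ring
  calc
    x ^ s * (x + 1 + s) = (x ^ (s / (s + 1)) * (x + 1 + s) ^ (1 / (s + 1))) ^ (s + 1) := by
      rw [mul_rpow (by positivity) (by positivity), ← rpow_mul hx, ← rpow_mul (by positivity),
        div_mul_cancel₀ _ hs'.ne', div_mul_cancel₀ _ hs'.ne', rpow_one]
    _ ≤ (x + 1) ^ (s + 1) := by gcongr

theorem gammaSeq_pos {s : ℝ} (hs : 0 < s) {n : ℕ} (hn : n ≠ 0) : 0 < GammaSeq s n := by
  have := Nat.pos_of_ne_zero hn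
  unfold GammaSeq
  positivity

theorem monotone_gammaSeq {s : ℝ} (hs : 0 < s) : Monotone (GammaSeq s) := by
  refine monotone_nat_of_le_succ fun n ↦ ?_
  have rpow_bound := rpow_mul_add_le_add_one_rpow n.cast_nonneg hs.le
  have hpos : 0 < s + ↑(n + 1) := by positivity
  unfold GammaSeq
  rw [prod_range_succ _ (n + 1), div_mul_eq_div_div_swap, Nat.factorial_succ]
  gcongr
  rw [le_div_iff₀ hpos]
  push_cast
  rw [rpow_add_one (by positivity)] at rpow_bound
  calc
    (n : ℝ) ^ s * n.factorial * (s + (n + 1)) = n ^ s * (n + 1 + s) * n.factorial := by ring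
    _ ≤ ((n + 1) ^ s * (n + 1)) * n.factorial := by gcongr
    _ = _ := by ring

theorem gammaSeq_le_gamma {s : ℝ} (hs : 0 < s) (n : ℕ) : GammaSeq s n ≤ Gamma s :=
  (monotone_gammaSeq hs).ge_of_tendsto (GammaSeq_tendsto_Gamma s) n

theorem inv_gammaSeq (s : ℝ) (n : ℕ) :
    (GammaSeq s n)⁻¹ = (n + 1) * (n : ℝ) ^ (-s) * Ring.multichoose s (n + 1) := by
  rw [GammaSeq, multichoose_eq_prod_div_factorial, Nat.factorial_succ, rpow_neg n.cast_nonneg,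
    inv_div]
  push_cast
  field_simp

theorem pow_div_gammaSeq (a b x : ℝ) {n : ℕ} (hn : n ≠ 0) (k : ℕ) :
    x ^ k / GammaSeq (a * k + b) n =
      (n + 1) * (n : ℝ) ^ (-b) * ((x / n ^ a) ^ k * Ring.multichoose (a * k + b) (n + 1)) := by
  have hn' : (0 : ℝ) < n := by positivity
  rw [div_eq_mul_inv, inv_gammaSeq, neg_add, rpow_add hn', rpow_neg hn'.le (a * k),
    rpow_mul_natCast hn'.le, div_pow]
  ring

/-- The Mittag-Leffler series with `Γ` replaced by the `n`-th term `GammaSeq` of Euler's limit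
formula for it. -/
noncomputable def mittagLefflerApprox (a b x : ℝ) (n : ℕ) : ℝ :=
  ∑' k : ℕ, x ^ k / GammaSeq (a * k + b) n

theorem mittagLefflerApprox_eq_resolventCoeff (a b x : ℝ) {n : ℕ} (hn : n ≠ 0) :
    mittagLefflerApprox a b x n =
      (n + 1) * (n : ℝ) ^ (-b) * resolventCoeff a b (x / n ^ a) (n + 1) := by
  simp only [mittagLefflerApprox, pow_div_gammaSeq a b x hn, tsum_mul_left, resolventCoeff]

theorem eventually_abs_div_rpow_lt_one {a : ℝ} (ha : 0 < a) (x : ℝ) :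
    ∀ᶠ n : ℕ in atTop, |x / (n : ℝ) ^ a| < 1 := by
  have tendsto_zero : Tendsto (fun n : ℕ ↦ |x / (n : ℝ) ^ a|) atTop (𝓝 0) := by
    simpa using ((tendsto_rpow_atTop ha).comp tendsto_natCast_atTop_atTop).const_div_atTop x |>.abs
  exact tendsto_zero.eventually_lt_const one_pos

theorem exists_summable_pow_div_gammaSeq {a : ℝ} (ha : 0 < a) (b x : ℝ) :
    ∃ m : ℕ, m ≠ 0 ∧ Summable fun k : ℕ ↦ x ^ k / GammaSeq (a * k + b) m := by
  obtain ⟨m, hm, hxm⟩ :=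
    ((eventually_ne_atTop 0).and (eventually_abs_div_rpow_lt_one ha x)).exists
  refine ⟨m, hm, ?_⟩
  simp only [pow_div_gammaSeq a b x hm]
  exact (summable_pow_mul_multichoose a b (m + 1) hxm).mul_left _

variable {a b : ℝ}

theorem tendsto_mittagLefflerApprox (ha : 0 < a) (hb : 0 < b) (x : ℝ) :
    Tendsto (mittagLefflerApprox a b x) atTop (𝓝 (mittagLeffler a b x)) := by
  obtain ⟨m, hm, summable_bound⟩ := exists_summable_pow_div_gammaSeq ha b |x|
  refine tendsto_tsum_of_dominated_convergence summable_bound (fun k ↦ ?_) ?_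
  · exact tendsto_const_nhds.div (GammaSeq_tendsto_Gamma _) (Gamma_pos_of_pos (by positivity)).ne'
  · filter_upwards [eventually_ge_atTop m] with n hmn k
    have hs : 0 < a * k + b := by positivity
    have hm_pos := gammaSeq_pos hs hm
    have hmono := monotone_gammaSeq hs hmn
    rw [norm_div, norm_pow, norm_of_nonneg (hm_pos.le.trans hmono), norm_eq_abs]
    gcongr

theorem summable_pow_div_gamma (ha : 0 < a) (hb : 0 < b) (x : ℝ) :
    Summable fun k : ℕ ↦ x ^ k / Gamma (a * k + b) := by
  obtain ⟨m, hm, summable_bound⟩ := exists_summable_pow_div_gammaSeq ha b |x|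
  refine summable_bound.of_norm_bounded fun k ↦ ?_
  have hs : 0 < a * k + b := by positivity
  have hm_pos := gammaSeq_pos hs hm
  have hle := gammaSeq_le_gamma hs m
  rw [norm_div, norm_pow, norm_of_nonneg (hm_pos.le.trans hle), norm_eq_abs]
  gcongr

end EulerLimit

section MittagLeffler

variable {a b : ℝ}

theorem analyticOnNhd_mittagLeffler (ha : 0 < a) (hb : 0 < b) :
    AnalyticOnNhd ℝ (mittagLeffler a b) Set.univ := by
  let p := FormalMultilinearSeries.ofScalars ℝ fun k : ℕ ↦ (Gamma (a * k + b))⁻¹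
  have radius_eq_top : p.radius = ⊤ := by
    refine p.radius_eq_top_of_summable_norm fun r ↦ ?_
    refine (summable_pow_div_gamma ha hb r).congr fun k ↦ ?_
    have := Gamma_pos_of_pos (show 0 < a * k + b by positivity)
    rw [FormalMultilinearSeries.ofScalars_norm, norm_inv, norm_of_nonneg this.le]
    ring
  have sum_eq : p.sum = mittagLeffler a b := by
    ext x
    simp only [p, FormalMultilinearSeries.sum, FormalMultilinearSeries.ofScalars_apply_eq,
      mittagLeffler, smul_eq_mul, div_eq_inv_mul]
  have hasFPowerSeries := p.hasFPowerSeriesOnBall (radius_eq_top ▸ ENNReal.zero_lt_top)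
  rw [sum_eq, radius_eq_top] at hasFPowerSeries
  simpa only [Metric.eball_top] using hasFPowerSeries.analyticOnNhd

theorem mittagLeffler_zero (a b : ℝ) : mittagLeffler a b 0 = (Gamma b)⁻¹ := by
  rw [mittagLeffler, tsum_eq_single 0 fun k hk ↦ by rw [zero_pow hk, zero_div]]
  simp

theorem mittagLeffler_nonneg (ha₀ : 0 < a) (ha₁ : a ≤ 1) (hab : a ≤ b) (x : ℝ) :
    0 ≤ mittagLeffler a b x := by
  refine ge_of_tendsto (tendsto_mittagLefflerApprox ha₀ (ha₀.trans_le hab) x) ?_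
  filter_upwards [eventually_ne_atTop 0, eventually_abs_div_rpow_lt_one ha₀ x] with n hn hx
  rw [mittagLefflerApprox_eq_resolventCoeff a b x hn]
  exact mul_nonneg (by positivity) (resolventCoeff_nonneg ha₀.le ha₁ hab hx (n + 1))

theorem monotone_mittagLeffler (ha₀ : 0 < a) (ha₁ : a ≤ 1) (hab : a ≤ b) :
    Monotone (mittagLeffler a b) := by
  intro x y hxy
  have hb := ha₀.trans_le hab
  refine le_of_tendsto_of_tendsto (tendsto_mittagLefflerApprox ha₀ hb x)
    (tendsto_mittagLefflerApprox ha₀ hb y) ?_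
  filter_upwards [eventually_ne_atTop 0, eventually_abs_div_rpow_lt_one ha₀ x,
    eventually_abs_div_rpow_lt_one ha₀ y] with n hn hx hy
  rw [mittagLefflerApprox_eq_resolventCoeff a b x hn,
    mittagLefflerApprox_eq_resolventCoeff a b y hn]
  gcongr
  exact resolventCoeff_mono ha₀.le ha₁ hab hx hy (by gcongr) (n + 1)

end MittagLeffler

theorem mittagLeffler_pos_general {a b : ℝ} (ha₀ : 0 < a) (ha₁ : a ≤ 1) (hab : a ≤ b)
    (x : ℝ) : 0 < mittagLeffler a b x := by
  have hb := ha₀.trans_le hab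
  refine (mittagLeffler_nonneg ha₀ ha₁ hab x).lt_of_ne fun hx ↦ ?_
  have vanishes_below : mittagLeffler a b =ᶠ[𝓝 (x - 1)] 0 := by
    filter_upwards [Iio_mem_nhds (sub_one_lt x)] with y hy
    exact le_antisymm ((monotone_mittagLeffler ha₀ ha₁ hab hy.le).trans_eq hx.symm)
      (mittagLeffler_nonneg ha₀ ha₁ hab y)
  have vanishes : mittagLeffler a b 0 = 0 :=
    (analyticOnNhd_mittagLeffler ha₀ hb).eqOn_zero_of_preconnected_of_eventuallyEq_zero
      isPreconnected_univ (Set.mem_univ _) vanishes_below (Set.mem_univ 0)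
  rw [mittagLeffler_zero] at vanishes
  exact (inv_pos.2 (Gamma_pos_of_pos hb)).ne' vanishes

/-- For `α ∈ (0,1)`, the Mittag-Leffler function `E_{α,α}` is strictly positive on
all of `ℝ` (in particular at negative arguments). -/
theorem mittagLeffler_pos (α : ℝ) (hα : α ∈ Set.Ioo (0 : ℝ) 1) (x : ℝ) :
    0 < mittagLeffler α α x :=
  mittagLeffler_pos_general hα.1 hα.2.le le_rfl x
end
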